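/- Let p be a prime, q = 1/p, let μ ≥ 1 be an integer, and set s = ⌊(μ−1)/2⌋. Then, as n → ∞, P(n, p^μ) converges to (Π_∞(q) / ((1−q)·Π_∞(q²))) · ∑_{j=0}^{s} (q^{3j} − q^{μ+j}) / Π_j(q²). -/

import Mathlib

/-- Number of symmetric `n × n` matrices over `ZMod m` with nonzero determinant. -/
noncomputable def Nsym (n m : ℕ) : ℕ :=
  Nat.card {A : Matrix (Fin n) (Fin n) (ZMod m) // A.IsSymm ∧ A.det ≠ 0}

/-- Proportion of symmetric `n × n` matrices over `ZMod m` with nonzero determinant. -/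
noncomputable def Psym (n m : ℕ) : ℝ :=
  (Nsym n m : ℝ) / (m : ℝ) ^ (n * (n + 1) / 2)

/-- `Π_n(t) = ∏_{j=1}^n (1 - t^j)`. -/
noncomputable def PiProd (n : ℕ) (t : ℝ) : ℝ :=
  ∏ j ∈ Finset.range n, (1 - t ^ (j + 1))

/-- `Π_∞(t) = ∏_{j=1}^∞ (1 - t^j)`. -/
noncomputable def PiProdInf (t : ℝ) : ℝ :=
  ∏' j : ℕ, (1 - t ^ (j + 1))

open Finset in
theorem sum_range_two_mul {M : Type*} [AddCommMonoid M] (g : ℕ → M) (n : ℕ) :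
    ∑ k ∈ range (2 * n), g k = ∑ j ∈ range n, (g (2 * j) + g (2 * j + 1)) := by
  induction n with
  | zero => simp
  | succ n ih => rw [mul_add, mul_one, sum_range_succ, sum_range_succ, ih, sum_range_succ, add_assoc]

theorem PiProd_succ (n : ℕ) (t : ℝ) : PiProd (n + 1) t = PiProd n t * (1 - t ^ (n + 1)) :=
  Finset.prod_range_succ _ _

theorem PiProd_pos {t : ℝ} (h0 : 0 < t) (h1 : t < 1) (n : ℕ) : 0 < PiProd n t :=
  Finset.prod_pos fun _ _ => sub_pos.2 (pow_lt_one₀ h0.le h1 (by omega))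

section DurfeeIdentity

variable {A : Type*} [CommRing A] [Algebra ℝ A]

/-- The `b`-analogue of the sum over Durfee squares, divided by `Π_m(b)`. -/
noncomputable def durfeeSum (b : ℝ) (z : A) (m : ℕ) : A :=
  ∑ x ∈ Finset.HasAntidiagonal.antidiagonal m, algebraMap ℝ A (1 / (PiProd x.1 b * PiProd x.2 b)) *
    (algebraMap ℝ A b ^ (x.1 ^ 2) * z ^ x.1 *
      ∏ i ∈ Finset.range x.2, (1 - z * algebraMap ℝ A b ^ (x.1 + i + 1)))

theorem durfeeSum_succ {b : ℝ} (h0 : 0 < b) (h1 : b < 1) (z : A) (m : ℕ) :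
    algebraMap ℝ A (1 - b ^ (m + 1)) * durfeeSum b z (m + 1) =
      (1 - z * algebraMap ℝ A b ^ (m + 1)) * durfeeSum b z m +
        z * algebraMap ℝ A b ^ (m + 1) * durfeeSum b (z * algebraMap ℝ A b) m := by
  have hP := fun n => (PiProd_pos h0 h1 n).ne'
  have hs : ∀ n, 1 - b ^ (n + 1) ≠ 0 := fun n =>
    (sub_pos.2 (pow_lt_one₀ h0.le h1 (by omega))).ne'
  set g : ℕ × ℕ → A := fun x => (algebraMap ℝ A b ^ (x.1 ^ 2) * z ^ x.1 *
      ∏ i ∈ Finset.range x.2, (1 - z * algebraMap ℝ A b ^ (x.1 + i + 1))) with hg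
  have hsplit : algebraMap ℝ A (1 - b ^ (m + 1)) * durfeeSum b z (m + 1) =
      ∑ x ∈ Finset.HasAntidiagonal.antidiagonal (m + 1),
        algebraMap ℝ A ((1 - b ^ x.2) / (PiProd x.1 b * PiProd x.2 b)) * g x +
      ∑ x ∈ Finset.HasAntidiagonal.antidiagonal (m + 1),
        algebraMap ℝ A (b ^ x.2 * (1 - b ^ x.1) / (PiProd x.1 b * PiProd x.2 b)) * g x := by
    rw [durfeeSum, Finset.mul_sum, ← Finset.sum_add_distrib]
    refine Finset.sum_congr rfl fun x hx => ?_
    rw [← add_mul, ← map_add, ← mul_assoc, ← map_mul]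
    congr 2
    rw [← Finset.HasAntidiagonal.mem_antidiagonal.1 hx, pow_add]
    ring
  rw [hsplit, Finset.Nat.sum_antidiagonal_succ', Finset.Nat.sum_antidiagonal_succ]
  simp only [pow_zero, sub_self, zero_div, mul_zero, map_zero, zero_mul, zero_add]
  rw [durfeeSum, durfeeSum, Finset.mul_sum, Finset.mul_sum]
  congr 1
  · refine Finset.sum_congr rfl fun x hx => ?_
    have e : (1 - b ^ (x.2 + 1)) / (PiProd x.1 b * PiProd (x.2 + 1) b) =
        1 / (PiProd x.1 b * PiProd x.2 b) := by
      rw [PiProd_succ]; have := hP x.1; have := hP x.2; have := hs x.2; field_simp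
    rw [e]
    simp only [hg]
    rw [Finset.prod_range_succ, Finset.HasAntidiagonal.mem_antidiagonal.1 hx]
    ring
  · refine Finset.sum_congr rfl fun x hx => ?_
    have e : b ^ x.2 * (1 - b ^ (x.1 + 1)) / (PiProd (x.1 + 1) b * PiProd x.2 b) =
        b ^ x.2 * (1 / (PiProd x.1 b * PiProd x.2 b)) := by
      rw [PiProd_succ]; have := hP x.1; have := hP x.2; have := hs x.1; field_simp
    have e2 : ∀ i, z * algebraMap ℝ A b ^ (x.1 + 1 + i + 1) =
        z * algebraMap ℝ A b * algebraMap ℝ A b ^ (x.1 + i + 1) := fun i => by ring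
    rw [e, map_mul, map_pow]
    simp only [hg, e2]
    rw [← Finset.HasAntidiagonal.mem_antidiagonal.1 hx]
    ring

theorem PiProd_mul_durfeeSum {b : ℝ} (h0 : 0 < b) (h1 : b < 1) (m : ℕ) (z : A) :
    algebraMap ℝ A (PiProd m b) * durfeeSum b z m = 1 := by
  induction m generalizing z with
  | zero => simp [durfeeSum, PiProd]
  | succ m ih =>
    rw [PiProd_succ, map_mul, mul_assoc, durfeeSum_succ h0 h1, mul_add, mul_left_comm, ih,
      mul_left_comm, ih]
    ring

end DurfeeIdentity

/-- The coefficient of `u^j` in `1 / ∏_{i<m} (1 - u b^i)`. -/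
noncomputable def invProdCoeff (b : ℝ) (m j : ℕ) : ℝ :=
  (∏ i ∈ Finset.range j, (1 - b ^ (m + i))) / PiProd j b

theorem invProdCoeff_succ {b : ℝ} (h0 : 0 < b) (h1 : b < 1) (m j : ℕ) :
    invProdCoeff b (m + 1) (j + 1) - b ^ m * invProdCoeff b (m + 1) j =
      invProdCoeff b m (j + 1) := by
  have hP := (PiProd_pos h0 h1 j).ne'
  have hs : 1 - b ^ (j + 1) ≠ 0 := (sub_pos.2 (pow_lt_one₀ h0.le h1 (by omega))).ne'
  have e : ∀ i, b ^ (m + (i + 1)) = b ^ (m + 1 + i) := fun i => by ring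
  rw [invProdCoeff, invProdCoeff, invProdCoeff, PiProd_succ,
    Finset.prod_range_succ' (fun i => 1 - b ^ (m + i)), Finset.prod_range_succ]
  simp only [e]
  field_simp
  ring

section ClosedForm

open PowerSeries

/-- The power series `1 / ∏_{i<m} (1 - q^(2i+3) t^2)` in `t`. -/
noncomputable def invProdSeries (q : ℝ) (m : ℕ) : ℝ⟦X⟧ :=
  PowerSeries.mk fun a => if a % 2 = 0 then invProdCoeff (q ^ 2) m (a / 2) * q ^ (3 * (a / 2)) else 0

theorem invProdSeries_zero (q : ℝ) : invProdSeries q 0 = 1 := by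
  ext a
  rw [invProdSeries, coeff_mk, coeff_one]
  rcases a with _ | _ | a
  · simp [invProdCoeff, PiProd]
  · simp
  · have : (a + 2) / 2 = a / 2 + 1 := by omega
    simp [invProdCoeff, this, Finset.prod_range_succ']

theorem invProdSeries_succ {q : ℝ} (h0 : 0 < q) (h1 : q < 1) (m : ℕ) :
    invProdSeries q (m + 1) * (1 - C q * X ^ 2 * algebraMap ℝ ℝ⟦X⟧ (q ^ 2) ^ (m + 1)) =
      invProdSeries q m := by
  have hb0 : 0 < q ^ 2 := by positivity
  have hb1 : q ^ 2 < 1 := pow_lt_one₀ h0.le h1 (by norm_num)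
  have e : invProdSeries q (m + 1) * (1 - C q * X ^ 2 * algebraMap ℝ ℝ⟦X⟧ (q ^ 2) ^ (m + 1)) =
      invProdSeries q (m + 1) -
        C (q * (q ^ 2) ^ (m + 1)) * (invProdSeries q (m + 1) * X ^ 2) := by
    rw [← map_pow, PowerSeries.algebraMap_apply, Algebra.algebraMap_self, RingHom.id_apply, map_mul]
    ring
  rw [e]
  ext a
  rw [map_sub, coeff_C_mul, coeff_mul_X_pow']
  rcases a with _ | _ | a
  · simp [invProdSeries, invProdCoeff]
  · simp [invProdSeries]
  · have h2 : (a + 2) / 2 = a / 2 + 1 := by omega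
    simp only [invProdSeries, coeff_mk, add_assoc, Nat.reduceAdd, Nat.add_mod_right, h2,
      le_add_iff_nonneg_left, zero_le, if_true, Nat.add_sub_cancel]
    split_ifs
    · rw [← invProdCoeff_succ hb0 hb1 m (a / 2)]
      ring
    · simp

/-- `F_n / (Π_n(q) (1 - qt)⁻¹)`, where `F_n` is the generating function in `t` of the valuation
of the determinant of a random symmetric matrix of size `n`. -/
noncomputable def detSeries (q : ℝ) (n : ℕ) : ℝ⟦X⟧ :=
  C (1 / PiProd (n / 2) (q ^ 2)) *
    (1 - C (if n % 2 = 0 then q ^ (n + 1) else 0) * X) * invProdSeries q (n / 2)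

theorem invProdSeries_eq_mul_prod {q : ℝ} (h0 : 0 < q) (h1 : q < 1) (j l : ℕ) :
    invProdSeries q j = invProdSeries q (j + l) * ∏ i ∈ Finset.range l,
      (1 - C q * X ^ 2 * algebraMap ℝ ℝ⟦X⟧ (q ^ 2) ^ (j + i + 1)) := by
  induction l with
  | zero => simp
  | succ l ih =>
    rw [ih, Finset.prod_range_succ, ← add_assoc, ← invProdSeries_succ h0 h1 (j + l)]
    ring

theorem invProdSeries_durfee {q : ℝ} (h0 : 0 < q) (h1 : q < 1) (m : ℕ) :
    C (1 / PiProd m (q ^ 2)) * invProdSeries q m =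
      ∑ j ∈ Finset.range (m + 1), C (1 / (PiProd j (q ^ 2) * PiProd (m - j) (q ^ 2))) *
        (C (q ^ (2 * j ^ 2 + j)) * X ^ (2 * j) * invProdSeries q j) := by
  have hb0 : 0 < q ^ 2 := by positivity
  have hb1 : q ^ 2 < 1 := pow_lt_one₀ h0.le h1 (by norm_num)
  have hD := PiProd_mul_durfeeSum (A := ℝ⟦X⟧) hb0 hb1 m (C q * X ^ 2)
  have hP := (PiProd_pos hb0 hb1 m).ne'
  have : C (1 / PiProd m (q ^ 2)) = durfeeSum (q ^ 2) (C q * X ^ 2 : ℝ⟦X⟧) m := by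
    calc C (1 / PiProd m (q ^ 2)) = C (1 / PiProd m (q ^ 2)) *
          (algebraMap ℝ ℝ⟦X⟧ (PiProd m (q ^ 2)) * durfeeSum (q ^ 2) (C q * X ^ 2 : ℝ⟦X⟧) m) := by
            rw [hD, mul_one]
      _ = _ := by
        rw [← mul_assoc, PowerSeries.algebraMap_apply, Algebra.algebraMap_self, RingHom.id_apply, ← map_mul,
          one_div_mul_cancel hP, map_one, one_mul]
  rw [this, durfeeSum, Finset.Nat.sum_antidiagonal_eq_sum_range_succ_mk, Finset.sum_mul]
  refine Finset.sum_congr rfl fun j hj => ?_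
  have hj' : j + (m - j) = m := by have := Finset.mem_range.1 hj; omega
  rw [invProdSeries_eq_mul_prod h0 h1 j (m - j), hj']
  simp only [PowerSeries.algebraMap_apply, Algebra.algebraMap_self, RingHom.id_apply, map_pow]
  ring

theorem detSeries_eq_sum {q : ℝ} (h0 : 0 < q) (h1 : q < 1) (n : ℕ) :
    detSeries q n = ∑ k ∈ Finset.range (n + 1),
      C (q ^ (k * (k + 1) / 2) * (1 / PiProd ((n - k) / 2) (q ^ 2))) * X ^ k * detSeries q k := by
  have hb0 : 0 < q ^ 2 := by positivity
  have hb1 : q ^ 2 < 1 := pow_lt_one₀ h0.le h1 (by norm_num)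
  have hP := fun m => (PiProd_pos hb0 hb1 m).ne'
  have t1 : ∀ j, 2 * j * (2 * j + 1) / 2 = 2 * j ^ 2 + j := fun j =>
    Nat.div_eq_of_eq_mul_left (by norm_num) (by ring)
  have t2 : ∀ j, (2 * j + 1) * (2 * j + 1 + 1) / 2 = 2 * j ^ 2 + j + (2 * j + 1) := fun j =>
    Nat.div_eq_of_eq_mul_left (by norm_num) (by ring)
  have m1 : ∀ j, 2 * j / 2 = j := fun j => by omega
  have m2 : ∀ j, (2 * j + 1) / 2 = j := fun j => by omega
  have m3 : ∀ j, 2 * j % 2 = 0 := fun j => by omega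
  have m4 : ∀ j, ¬ (2 * j + 1) % 2 = 0 := fun j => by omega
  obtain ⟨m, rfl | rfl⟩ : ∃ m, n = 2 * m ∨ n = 2 * m + 1 := ⟨n / 2, by omega⟩
  · rw [Finset.sum_range_succ, sum_range_two_mul]
    simp only [detSeries, t1, t2, m1, m2, m3, m4, if_true, if_false, map_zero, zero_mul, sub_zero,
      mul_one]
    conv_lhs => rw [mul_right_comm, invProdSeries_durfee h0 h1, Finset.sum_mul, Finset.sum_range_succ]
    congr 1
    · refine Finset.sum_congr rfl fun j hj => ?_
      obtain ⟨l, rfl⟩ : ∃ l, m = j + l + 1 := ⟨m - j - 1, by have := Finset.mem_range.1 hj; omega⟩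
      have e1 : (2 * (j + l + 1) - 2 * j) / 2 = l + 1 := by omega
      have e2 : (2 * (j + l + 1) - (2 * j + 1)) / 2 = l := by omega
      have e3 : j + l + 1 - j = l + 1 := by omega
      have e4 : 1 / PiProd l (q ^ 2) = 1 / PiProd (l + 1) (q ^ 2) * (1 - (q ^ 2) ^ (l + 1)) := by
        have := hP (l + 1)
        rw [PiProd_succ] at this ⊢
        rw [div_mul_eq_mul_div, one_mul, eq_comm, div_eq_div_iff this (hP l)]
        ring
      rw [e1, e2, e3, e4]
      simp only [one_div, mul_inv, map_mul, map_sub, map_one, map_pow]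
      ring
    · simp only [Nat.sub_self, Nat.zero_div, one_div, mul_inv, map_mul, map_pow]
      ring
  · rw [show 2 * m + 1 + 1 = 2 * (m + 1) by ring, sum_range_two_mul]
    simp only [detSeries, t1, t2, m1, m2, m3, m4, if_true, if_false, map_zero, zero_mul, sub_zero,
      mul_one]
    rw [invProdSeries_durfee h0 h1]
    refine Finset.sum_congr rfl fun j hj => ?_
    have := Finset.mem_range.1 hj
    have e1 : (2 * m + 1 - 2 * j) / 2 = m - j := by omega
    have e2 : (2 * m + 1 - (2 * j + 1)) / 2 = m - j := by omega
    rw [e1, e2]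
    simp only [one_div, mul_inv, map_mul, map_pow]
    ring

end ClosedForm

/-- For `y k` the contribution of corank `k`, the average of `y` over the corank distribution of a
random symmetric matrix of size `m` over `ZMod p`, divided by `Π_m(q)`. -/
noncomputable def corankSum (q : ℝ) (y : ℕ → ℝ) (m : ℕ) : ℝ :=
  ∑ x ∈ Finset.HasAntidiagonal.antidiagonal m,
    q ^ (x.1 * (x.1 + 1) / 2) / PiProd x.1 q * (1 / PiProd (x.2 / 2) (q ^ 2)) * y x.1

theorem corankSum_zero (q : ℝ) (y : ℕ → ℝ) : corankSum q y 0 = y 0 := by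
  simp [corankSum, PiProd]

theorem corankWeight_succ {q : ℝ} (h0 : 0 < q) (h1 : q < 1) (k : ℕ) :
    (1 - q ^ (k + 1)) * (q ^ ((k + 1) * (k + 1 + 1) / 2) / PiProd (k + 1) q) =
      q ^ (k + 1) * (q ^ (k * (k + 1) / 2) / PiProd k q) := by
  have hP := (PiProd_pos h0 h1 k).ne'
  have hs : 1 - q ^ (k + 1) ≠ 0 := (sub_pos.2 (pow_lt_one₀ h0.le h1 (by omega))).ne'
  have ht : (k + 1) * (k + 1 + 1) / 2 = k * (k + 1) / 2 + (k + 1) := by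
    rw [show (k + 1) * (k + 1 + 1) = k * (k + 1) + (k + 1) * 2 by ring,
      Nat.add_mul_div_right _ _ (by norm_num)]
  rw [PiProd_succ, ht, pow_add _ (k * (k + 1) / 2)]
  generalize q ^ (k * (k + 1) / 2) = c
  generalize q ^ (k + 1) = a at hs ⊢
  field_simp

theorem rankWeight_succ_succ {q : ℝ} (h0 : 0 < q) (h1 : q < 1) (j : ℕ) :
    (1 - q ^ (j + 2)) * (1 / PiProd ((j + 2) / 2) (q ^ 2)) =
      (1 - q) * (1 / PiProd ((j + 1) / 2) (q ^ 2)) + q * (1 / PiProd (j / 2) (q ^ 2)) := by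
  have hb0 : 0 < q ^ 2 := by positivity
  have hb1 : q ^ 2 < 1 := pow_lt_one₀ h0.le h1 (by norm_num)
  obtain ⟨m, rfl | rfl⟩ : ∃ m, j = 2 * m ∨ j = 2 * m + 1 := ⟨j / 2, by omega⟩
  · have hP := (PiProd_pos hb0 hb1 m).ne'
    have hs : 1 - (q ^ 2) ^ (m + 1) ≠ 0 := (sub_pos.2 (pow_lt_one₀ hb0.le hb1 (by omega))).ne'
    rw [show (2 * m + 2) / 2 = m + 1 by omega, show (2 * m + 1) / 2 = m by omega,
      show 2 * m / 2 = m by omega, PiProd_succ, show q ^ (2 * m + 2) = (q ^ 2) ^ (m + 1) by ring]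
    field_simp
    ring
  · have hP := (PiProd_pos hb0 hb1 m).ne'
    have hs : 1 - (q ^ 2) ^ (m + 1) ≠ 0 := (sub_pos.2 (pow_lt_one₀ hb0.le hb1 (by omega))).ne'
    rw [show (2 * m + 1 + 2) / 2 = m + 1 by omega, show (2 * m + 1 + 1) / 2 = m + 1 by omega,
      show (2 * m + 1) / 2 = m by omega, PiProd_succ,
      show q ^ (2 * m + 1 + 2) = q * (q ^ 2) ^ (m + 1) by ring]
    field_simp
    ring

theorem corankSum_one {q : ℝ} (h1 : q < 1) (y : ℕ → ℝ) :
    (1 - q) * corankSum q y 1 = (1 - q) * y 0 + q * y 1 := by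
  have : 1 - q ≠ 0 := (sub_pos.2 h1).ne'
  rw [corankSum, Finset.Nat.sum_antidiagonal_succ]
  simp [PiProd]
  field_simp

theorem corankSum_succ_succ {q : ℝ} (h0 : 0 < q) (h1 : q < 1) (y : ℕ → ℝ) (m : ℕ) :
    (1 - q ^ (m + 2)) * corankSum q y (m + 2) =
      (1 - q) * corankSum q y (m + 1) + q * corankSum q y m +
        q ^ (m + 2) * corankSum q (fun k => y (k + 1)) (m + 1) := by
  set v : ℕ → ℝ := fun k => q ^ (k * (k + 1) / 2) / PiProd k q with hv
  set w : ℕ → ℝ := fun j => 1 / PiProd (j / 2) (q ^ 2) with hw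
  have hvs : ∀ k, (1 - q ^ (k + 1)) * v (k + 1) = q ^ (k + 1) * v k := corankWeight_succ h0 h1
  have hws : ∀ j, (1 - q ^ (j + 2)) * w (j + 2) = (1 - q) * w (j + 1) + q * w j :=
    rankWeight_succ_succ h0 h1
  have hc : ∀ (y : ℕ → ℝ) n, corankSum q y n =
    ∑ x ∈ Finset.HasAntidiagonal.antidiagonal n, v x.1 * w x.2 * y x.1 := fun _ _ => rfl
  have hsplit : (1 - q ^ (m + 2)) * corankSum q y (m + 2) =
      ∑ x ∈ Finset.HasAntidiagonal.antidiagonal (m + 1 + 1),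
        (1 - q ^ x.2) * (v x.1 * w x.2 * y x.1) +
      ∑ x ∈ Finset.HasAntidiagonal.antidiagonal (m + 1 + 1),
        q ^ x.2 * ((1 - q ^ x.1) * v x.1) * (w x.2 * y x.1) := by
    rw [hc, Finset.mul_sum, ← Finset.sum_add_distrib]
    refine Finset.sum_congr rfl fun x hx => ?_
    rw [← Finset.HasAntidiagonal.mem_antidiagonal.1 hx, pow_add]
    ring
  rw [hsplit]
  congr 1
  · rw [Finset.Nat.sum_antidiagonal_succ', Finset.Nat.sum_antidiagonal_succ', hc y (m + 1),
      Finset.Nat.sum_antidiagonal_succ', hc y m]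
    have hw1 : w 1 = w 0 := rfl
    simp only [pow_zero, sub_self, zero_mul, zero_add, pow_one, hw1, mul_add, add_right_inj,
      Finset.mul_sum, add_assoc, ← Finset.sum_add_distrib]
    refine Finset.sum_congr rfl fun x _ => ?_
    linear_combination (v x.1 * y x.1) * hws x.2
  · rw [Finset.Nat.sum_antidiagonal_succ, hc, Finset.mul_sum]
    simp only [pow_zero, sub_self, zero_mul, mul_zero, zero_add]
    refine Finset.sum_congr rfl fun x hx => ?_
    rw [hvs, show m + 2 = x.1 + x.2 + 1 by
      rw [Finset.HasAntidiagonal.mem_antidiagonal.1 hx]]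
    ring

section Solution

open PowerSeries

/-- Generating function in `t` of the probabilities that the determinant of a random symmetric
matrix of size `n` has valuation at most `d`. -/
noncomputable def cumulativeDetSeries (q : ℝ) (n : ℕ) : ℝ⟦X⟧ :=
  C (PiProd n q) * detSeries q n * PowerSeries.mk fun d => (1 - q ^ (d + 1)) / (1 - q)

theorem coeff_cumulativeDetSeries_eq_corankSum {q : ℝ} (h0 : 0 < q) (h1 : q < 1) (n d : ℕ) :
    coeff d (cumulativeDetSeries q n) = PiProd n q *
      corankSum q (fun k => if k ≤ d then coeff (d - k) (cumulativeDetSeries q k) else 0) n := by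
  have key : cumulativeDetSeries q n = C (PiProd n q) *
      ∑ x ∈ Finset.HasAntidiagonal.antidiagonal n,
      C (q ^ (x.1 * (x.1 + 1) / 2) / PiProd x.1 q * (1 / PiProd (x.2 / 2) (q ^ 2))) *
        (cumulativeDetSeries q x.1 * X ^ x.1) := by
    rw [cumulativeDetSeries, detSeries_eq_sum h0 h1,
      Finset.Nat.sum_antidiagonal_eq_sum_range_succ_mk, mul_assoc, Finset.sum_mul]
    congr 1
    refine Finset.sum_congr rfl fun k _ => ?_
    have hP := (PiProd_pos h0 h1 k).ne'
    have e : q ^ (k * (k + 1) / 2) = q ^ (k * (k + 1) / 2) / PiProd k q * PiProd k q := by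
      field_simp
    conv_lhs => rw [e]
    simp only [cumulativeDetSeries, map_mul]
    ring
  rw [key, coeff_C_mul, map_sum, corankSum]
  congr 1
  refine Finset.sum_congr rfl fun x _ => ?_
  rw [coeff_C_mul, coeff_mul_X_pow']

theorem cumulativeDetSeries_zero {q : ℝ} (h1 : q < 1) (d : ℕ) :
    coeff d (cumulativeDetSeries q 0) = 1 := by
  have : 1 - q ≠ 0 := (sub_pos.2 h1).ne'
  have e : cumulativeDetSeries q 0 = (PowerSeries.mk fun d => (1 - q ^ (d + 1)) / (1 - q)) -
      C q * ((PowerSeries.mk fun d => (1 - q ^ (d + 1)) / (1 - q)) * X ^ 1) := by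
    simp [cumulativeDetSeries, detSeries, invProdSeries_zero, PiProd]
    ring
  rw [e, map_sub, coeff_C_mul, coeff_mul_X_pow']
  rcases d with _ | d
  · simp [this]
  · simp
    field_simp
    ring

theorem eq_coeff_cumulativeDetSeries {q : ℝ} (h0 : 0 < q) (h1 : q < 1) {N : ℕ} {Y : ℕ → ℕ → ℝ}
    (hzero : ∀ e < N, Y 0 e = 1) (hlarge : ∀ n e, N ≤ e → Y n e = 0)
    (hrec : ∀ n e, Y n e = PiProd n q * corankSum q (fun k => Y k (e + k)) n) (n d e : ℕ)
    (h : e + d + 1 = N) : Y n e = coeff d (cumulativeDetSeries q n) := by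
  induction n using Nat.strong_induction_on generalizing d e with
  | _ n ihn =>
  rcases Nat.eq_zero_or_pos n with rfl | hn
  · rw [cumulativeDetSeries_zero h1, hzero e (by omega)]
  induction d using Nat.strong_induction_on generalizing e with
  | _ d ihd =>
  rw [hrec, coeff_cumulativeDetSeries_eq_corankSum h0 h1, corankSum, corankSum]
  congr 1
  refine Finset.sum_congr rfl fun x hx => ?_
  have hx' := Finset.HasAntidiagonal.mem_antidiagonal.1 hx
  congr 1
  split_ifs with hd
  · rcases (show x.1 ≤ n by omega).lt_or_eq with hlt | heq
    · exact ihn _ hlt _ _ (by omega)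
    · rw [heq] at hd ⊢
      exact ihd _ (by omega) _ (by omega)
  · exact hlarge _ _ (by omega)

end Solution

section Limit

open Filter Topology PowerSeries

theorem tendsto_PiProd {t : ℝ} (h0 : 0 < t) (h1 : t < 1) :
    Tendsto (fun n => PiProd n t) atTop (𝓝 (PiProdInf t)) := by
  have hs : Summable fun j : ℕ => ‖-t ^ (j + 1)‖ := by
    simp only [norm_neg, norm_pow, Real.norm_of_nonneg h0.le]
    exact (summable_nat_add_iff 1).2 (summable_geometric_of_lt_one h0.le h1)
  have := (multipliable_one_add_of_summable hs).hasProd.tendsto_prod_nat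
  simpa only [← sub_eq_add_neg, PiProd, PiProdInf] using this

theorem PiProdInf_ne_zero {t : ℝ} (h0 : 0 < t) (h1 : t < 1) : PiProdInf t ≠ 0 := by
  have hs : Summable fun j : ℕ => ‖-t ^ (j + 1)‖ := by
    simp only [norm_neg, norm_pow, Real.norm_of_nonneg h0.le]
    exact (summable_nat_add_iff 1).2 (summable_geometric_of_lt_one h0.le h1)
  have := tprod_one_add_ne_zero_of_summable (f := fun j : ℕ => -t ^ (j + 1)) (fun j => by
    rw [← sub_eq_add_neg]
    exact (sub_pos.2 (pow_lt_one₀ h0.le h1 (by omega))).ne') hs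
  simpa only [← sub_eq_add_neg, PiProdInf] using this

theorem tendsto_invProdCoeff {b : ℝ} (h0 : 0 < b) (h1 : b < 1) (j : ℕ) :
    Tendsto (fun m => invProdCoeff b m j) atTop (𝓝 (1 / PiProd j b)) := by
  have : Tendsto (fun m => ∏ i ∈ Finset.range j, (1 - b ^ (m + i))) atTop
      (𝓝 (∏ i ∈ Finset.range j, (1 - 0))) :=
    tendsto_finsetProd _ fun i _ => tendsto_const_nhds.sub
      ((tendsto_add_atTop_iff_nat i).2 (tendsto_pow_atTop_nhds_zero_of_lt_one h0.le h1))
  simp only [sub_zero, Finset.prod_const_one] at this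
  exact this.div_const _

theorem tendsto_coeff_invProdSeries_mul {q : ℝ} (h0 : 0 < q) (h1 : q < 1) (J : ℝ⟦X⟧) (d : ℕ) :
    Tendsto (fun m => coeff d (invProdSeries q m * J)) atTop
      (𝓝 (∑ a ∈ Finset.range (d + 1), (if a % 2 = 0 then
        1 / PiProd (a / 2) (q ^ 2) * q ^ (3 * (a / 2)) else 0) * coeff (d - a) J)) := by
  have hb0 : 0 < q ^ 2 := by positivity
  have hb1 : q ^ 2 < 1 := pow_lt_one₀ h0.le h1 (by norm_num)
  simp only [coeff_mul, Finset.Nat.sum_antidiagonal_eq_sum_range_succ_mk, invProdSeries, coeff_mk]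
  refine tendsto_finsetSum _ fun a _ => Tendsto.mul_const _ ?_
  split_ifs
  · exact (tendsto_invProdCoeff hb0 hb1 _).mul_const _
  · exact tendsto_const_nhds

theorem tendsto_coeff_cumulativeDetSeries {q : ℝ} (h0 : 0 < q) (h1 : q < 1) (d : ℕ) :
    Tendsto (fun n => coeff d (cumulativeDetSeries q n)) atTop
      (𝓝 (PiProdInf q / PiProdInf (q ^ 2) * ∑ a ∈ Finset.range (d + 1), (if a % 2 = 0 then
        1 / PiProd (a / 2) (q ^ 2) * q ^ (3 * (a / 2)) else 0) *
          ((1 - q ^ (d - a + 1)) / (1 - q)))) := by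
  have hb0 : 0 < q ^ 2 := by positivity
  have hb1 : q ^ 2 < 1 := pow_lt_one₀ h0.le h1 (by norm_num)
  set J : ℝ⟦X⟧ := PowerSeries.mk fun d => (1 - q ^ (d + 1)) / (1 - q) with hJ
  have hhalf : Tendsto (fun n : ℕ => n / 2) atTop atTop :=
    Nat.tendsto_div_const_atTop (by norm_num)
  have hε : Tendsto (fun n : ℕ => if n % 2 = 0 then q ^ (n + 1) else 0) atTop (𝓝 0) := by
    refine squeeze_zero (fun n => by split_ifs <;> positivity) (fun n => ?_)
      ((tendsto_add_atTop_iff_nat 1).2 (tendsto_pow_atTop_nhds_zero_of_lt_one h0.le h1))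
    split_ifs
    · exact le_rfl
    · positivity
  have e : ∀ n, coeff d (cumulativeDetSeries q n) = PiProd n q / PiProd (n / 2) (q ^ 2) *
      (coeff d (invProdSeries q (n / 2) * J) - (if n % 2 = 0 then q ^ (n + 1) else 0) *
        coeff d (invProdSeries q (n / 2) * (J * X))) := fun n => by
    rw [← coeff_C_mul, ← map_sub, ← coeff_C_mul]
    congr 1
    rw [cumulativeDetSeries, detSeries, ← hJ, div_eq_mul_one_div (PiProd n q), map_mul]
    ring
  simp only [e]
  have h := (((tendsto_PiProd h0 h1).div ((tendsto_PiProd hb0 hb1).comp hhalf)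
    (PiProdInf_ne_zero hb0 hb1)).mul
    (((tendsto_coeff_invProdSeries_mul h0 h1 J d).comp hhalf).sub
      (hε.mul ((tendsto_coeff_invProdSeries_mul h0 h1 (J * X) d).comp hhalf))))
  rw [zero_mul, sub_zero] at h
  simpa only [hJ, coeff_mk, Pi.div_apply, Function.comp_apply] using h

theorem sum_even_eq {q : ℝ} (μ : ℕ) (hμ : 1 ≤ μ) :
    ∑ a ∈ Finset.range (μ - 1 + 1), (if a % 2 = 0 then
        1 / PiProd (a / 2) (q ^ 2) * q ^ (3 * (a / 2)) else 0) *
          ((1 - q ^ (μ - 1 - a + 1)) / (1 - q)) =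
      (1 / (1 - q)) * ∑ j ∈ Finset.range ((μ - 1) / 2 + 1),
        (q ^ (3 * j) - q ^ (μ + j)) / PiProd j (q ^ 2) := by
  have hext : ∀ g : ℕ → ℝ, (∑ a ∈ Finset.range (μ - 1 + 1), if a % 2 = 0 then g a else 0) =
      ∑ j ∈ Finset.range ((μ - 1) / 2 + 1), g (2 * j) := fun g => by
    rw [← Finset.sum_filter]
    refine Finset.sum_nbij' (fun a => a / 2) (fun j => 2 * j) ?_ ?_ ?_ ?_ ?_ <;>
      simp only [Finset.mem_filter, Finset.mem_range]
    · intro a; omega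
    · intro a; omega
    · intro a; omega
    · intro a; omega
    · intro a ha; congr 1; omega
  simp only [ite_mul, zero_mul]
  rw [hext, Finset.mul_sum]
  refine Finset.sum_congr rfl fun j hj => ?_
  have hj' := Finset.mem_range.1 hj
  rw [Nat.mul_div_cancel_left _ (by norm_num : 0 < 2), show μ + j = 3 * j + (μ - 1 - 2 * j + 1) by omega,
    pow_add]
  ring

end Limit

section Average

open scoped BigOperators

/-- The average of a real function over a finite type. -/
noncomputable def avg {α : Type*} [Finite α] (f : α → ℝ) : ℝ :=
  letI := Fintype.ofFinite α
  𝔼 a, f a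

variable {α β : Type*} [Finite α] [Finite β]

theorem avg_eq_sum_div [Fintype α] (f : α → ℝ) : avg f = (∑ a, f a) / Fintype.card α := by
  rw [avg, Subsingleton.elim (Fintype.ofFinite α) ‹Fintype α›, Fintype.expect_eq_sum_div_card]

theorem avg_equiv (e : α ≃ β) (f : β → ℝ) : avg (fun a => f (e a)) = avg f :=
  letI := Fintype.ofFinite α
  letI := Fintype.ofFinite β
  Fintype.expect_equiv e _ _ fun _ => rfl

theorem avg_prod (f : α × β → ℝ) : avg f = avg fun a => avg fun b => f (a, b) := by
  let := Fintype.ofFinite α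
  let := Fintype.ofFinite β
  simp only [avg_eq_sum_div, Fintype.card_prod, Fintype.sum_prod_type, ← Finset.sum_div,
    div_div, Nat.cast_mul]
  rw [mul_comm]

theorem avg_const [Nonempty α] (c : ℝ) : avg (fun _ : α => c) = c :=
  letI := Fintype.ofFinite α
  Fintype.expect_const c

theorem avg_zero : avg (fun _ : α => 0) = 0 :=
  letI := Fintype.ofFinite α
  Finset.expect_const_zero _

theorem avg_add (f g : α → ℝ) : avg (fun a => f a + g a) = avg f + avg g :=
  letI := Fintype.ofFinite α
  Finset.expect_add_distrib _ f g

theorem avg_sub (f g : α → ℝ) : avg (fun a => f a - g a) = avg f - avg g :=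
  letI := Fintype.ofFinite α
  Finset.expect_sub_distrib _ f g

theorem avg_const_mul (c : ℝ) (f : α → ℝ) : avg (fun a => c * f a) = c * avg f :=
  letI := Fintype.ofFinite α
  (Finset.mul_expect _ f c).symm

theorem avg_mul_const (c : ℝ) (f : α → ℝ) : avg (fun a => f a * c) = avg f * c :=
  letI := Fintype.ofFinite α
  (Finset.expect_mul _ f c).symm

theorem avg_pi_prod {κ : Type*} [Fintype κ] (g : κ → α → ℝ) :
    avg (fun b : κ → α => ∏ k, g k (b k)) = ∏ k, avg (g k) := by
  classical
  let := Fintype.ofFinite α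
  simp only [avg_eq_sum_div, Finset.prod_div_distrib, Finset.prod_const, Finset.card_univ,
    Fintype.card_fun, Nat.cast_pow, Fintype.prod_sum]

open scoped Classical in
/-- The real-valued truth value of a proposition. -/
noncomputable def ind (P : Prop) : ℝ := if P then 1 else 0

theorem ind_true {P : Prop} (h : P) : ind P = 1 := if_pos h

theorem ind_false {P : Prop} (h : ¬ P) : ind P = 0 := if_neg h

theorem ind_not (P : Prop) : ind (¬ P) = 1 - ind P := by
  by_cases hP : P <;> simp [ind, hP]

theorem avg_ind_range_mul {V W : Type*} [AddGroup V] [AddGroup W] [Finite V] [Finite W]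
    (φ : V →+ W) (f : W → ℝ) :
    avg (fun x => ind (x ∈ φ.range) * f x) =
      avg (fun x => ind (x ∈ φ.range)) * avg (fun x => f (φ x)) := by
  classical
  let := Fintype.ofFinite V
  let := Fintype.ofFinite W
  set K : ℕ := (Finset.univ.filter fun x => φ x = 0).card
  have hfib : ∀ g : W → ℝ, ∑ x, g (φ x) = K * ∑ y, ind (y ∈ φ.range) * g y := fun g => by
    rw [← Finset.sum_fiberwise (g := φ), Finset.mul_sum]
    refine Finset.sum_congr rfl fun y _ => ?_
    rw [Finset.sum_congr rfl (g := fun _ => g y) fun x hx => by rw [(Finset.mem_filter.1 hx).2],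
      Finset.sum_const, nsmul_eq_mul]
    by_cases hy : y ∈ φ.range
    · rw [ind_true hy, one_mul,
        AddMonoidHom.card_fiber_eq_of_mem_range φ hy (show (0 : W) ∈ Set.range φ from ⟨0, map_zero φ⟩)]
    · rw [ind_false hy, Finset.card_eq_zero.2 (Finset.filter_eq_empty_iff.2 fun x _ hx =>
        hy ⟨x, hx⟩)]
      simp
  have hone := hfib fun _ => 1
  have hV : (Fintype.card V : ℝ) ≠ 0 := by exact_mod_cast Fintype.card_ne_zero
  simp only [mul_one, Finset.sum_const, Finset.card_univ, nsmul_eq_mul] at hone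
  simp only [avg_eq_sum_div]
  rw [hfib f, div_mul_div_comm, hone]
  rw [hone] at hV
  have hK := left_ne_zero_of_mul hV
  have hS := right_ne_zero_of_mul hV
  by_cases hW : (Fintype.card W : ℝ) = 0
  · simp [hW]
  field_simp

theorem avg_ind_dvd_pi {R κ : Type*} [CommRing R] [Finite R] [Fintype κ] (π : R) (d : κ → Prop) :
    avg (fun b : κ → R => ind (∀ k, d k → π ∣ b k)) =
      avg (fun a : R => ind (π ∣ a)) ^ Nat.card {k // d k} := by
  classical
  have h : ∀ b : κ → R, ind (∀ k, d k → π ∣ b k) = ∏ k, if d k then ind (π ∣ b k) else 1 :=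
    fun b => by
    by_cases hb : ∀ k, d k → π ∣ b k
    · rw [ind_true hb, Finset.prod_eq_one]
      intro k _
      split_ifs with hk
      · exact ind_true (hb k hk)
      · rfl
    · rw [ind_false hb]
      push Not at hb
      obtain ⟨k, hk, hbk⟩ := hb
      rw [Finset.prod_eq_zero (Finset.mem_univ k)]
      rw [if_pos hk, ind_false hbk]
  simp only [h]
  rw [avg_pi_prod (fun k (a : R) => if d k then ind (π ∣ a) else 1), Nat.card_eq_fintype_card,
    Fintype.card_subtype, ← Finset.prod_const, Finset.prod_filter]
  refine Finset.prod_congr rfl fun k _ => ?_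
  split_ifs
  · rfl
  · exact avg_const 1

end Average

theorem card_subtype_ne {ι : Type*} (d : ι → Prop) {o : ι} (ho : ¬ d o) :
    Nat.card {k : {k // k ≠ o} // d k} = Nat.card {k // d k} :=
  Nat.card_congr
    { toFun := fun k => ⟨k.1.1, k.2⟩
      invFun := fun k => ⟨⟨k.1, fun h => ho (h ▸ k.2)⟩, k.2⟩
      left_inv := fun _ => rfl
      right_inv := fun _ => rfl }

theorem card_subtype_not_ne {ι : Type*} [Finite ι] (d : ι → Prop) {o : ι} (ho : ¬ d o) :
    Nat.card {k : {k // k ≠ o} // ¬ d k} + 1 = Nat.card {k // ¬ d k} := by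
  classical
  rw [← Finite.card_option]
  refine Nat.card_congr
    { toFun := fun k => k.elim ⟨o, ho⟩ fun k => ⟨k.1.1, k.2⟩
      invFun := fun k => if h : k.1 = o then none else some ⟨⟨k.1, h⟩, k.2⟩
      left_inv := ?_
      right_inv := ?_ }
  · rintro (_ | k)
    · simp
    · simp [k.1.2]
  · rintro ⟨k, hk⟩
    by_cases h : k = o
    · subst h; simp
    · simp [h]

section SymmetricMatrices

open Matrix

/-- Symmetric matrices over `R` indexed by `ι`. -/
abbrev SymMat (ι R : Type*) : Type _ := {A : Matrix ι ι R // A.IsSymm}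

namespace SymMat

variable {ι κ α β R : Type*}

/-- A symmetric matrix is a function on unordered pairs. -/
def equivSym2 : (Sym2 ι → R) ≃ SymMat ι R where
  toFun x := ⟨Matrix.of fun j k => x s(j, k), by ext j k; simp [Sym2.eq_swap]⟩
  invFun A := Sym2.lift ⟨fun j k => A.1 j k, fun j k => A.2.apply k j⟩
  left_inv x := by ext z; induction z with | _ j k => rfl
  right_inv A := by ext j k; rfl

/-- Reindexing of symmetric matrices. -/
def reindex (σ : ι ≃ κ) : SymMat κ R ≃ SymMat ι R where
  toFun A := ⟨A.1.submatrix σ σ, A.2.submatrix σ⟩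
  invFun A := ⟨A.1.submatrix σ.symm σ.symm, A.2.submatrix σ.symm⟩
  left_inv A := by ext; simp
  right_inv A := by ext; simp

/-- The block decomposition of a symmetric matrix. -/
def blocks : SymMat α R × (Matrix α β R × SymMat β R) ≃ SymMat (α ⊕ β) R where
  toFun x := ⟨fromBlocks x.1.1 x.2.1 x.2.1ᵀ x.2.2.1, IsSymm.fromBlocks x.1.2 rfl x.2.2.2⟩
  invFun A := (⟨A.1.toBlocks₁₁, by ext j k; exact A.2.apply _ _⟩, A.1.toBlocks₁₂,
    ⟨A.1.toBlocks₂₂, by ext j k; exact A.2.apply _ _⟩)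
  left_inv x := by ext <;> rfl
  right_inv A := by
    ext (j | j) (k | k)
    · rfl
    · rfl
    · exact A.2.apply _ _
    · rfl

/-- Symmetric matrices of size one. -/
def unitEquiv : R ≃ SymMat Unit R where
  toFun a := ⟨Matrix.of fun _ _ => a, by ext; rfl⟩
  invFun A := A.1 () ()
  left_inv _ := rfl
  right_inv _ := by ext; rfl

/-- A row as a block. -/
def rowEquiv : (β → R) ≃ Matrix Unit β R where
  toFun b := Matrix.of fun _ k => b k
  invFun B := B ()
  left_inv _ := rfl
  right_inv _ := by ext; rfl

/-- The symmetric matrix with first row `(a, b)` and lower right block `D`. -/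
abbrev bordered (a : R) (b : β → R) (D : Matrix β β R) : Matrix (Unit ⊕ β) (Unit ⊕ β) R :=
  fromBlocks (Matrix.of fun _ _ => a) (Matrix.of fun _ k => b k) (Matrix.of fun _ k => b k)ᵀ D

theorem avg_blocks [Finite α] [Finite β] [Finite R] (f : Matrix (α ⊕ β) (α ⊕ β) R → ℝ) :
    avg (fun A : SymMat (α ⊕ β) R => f A.1) = avg fun E : SymMat α R =>
      avg fun B : Matrix α β R => avg fun D : SymMat β R => f (fromBlocks E.1 B Bᵀ D.1) := by
  rw [← avg_equiv blocks, avg_prod]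
  simp only [avg_prod]
  rfl

theorem avg_bordered [Finite β] [Finite R] (f : Matrix (Unit ⊕ β) (Unit ⊕ β) R → ℝ) :
    avg (fun A : SymMat (Unit ⊕ β) R => f A.1) = avg fun a : R =>
      avg fun b : β → R => avg fun D : SymMat β R => f (bordered a b D.1) := by
  rw [avg_blocks, ← avg_equiv unitEquiv]
  refine congrArg avg (funext fun a => ?_)
  rw [← avg_equiv rowEquiv]
  rfl

end SymMat

open SymMat

variable {ι κ α β R : Type*} [Fintype ι] [DecidableEq ι] [Fintype κ] [DecidableEq κ]
  [Fintype α] [DecidableEq α] [Fintype β] [DecidableEq β] [CommRing R]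

/-- Truth value of: the rows of `A` selected by `d` are divisible by `π`, and `π ^ e * det A ≠ 0`. -/
noncomputable def weight (π : R) (d : ι → Prop) (e : ℕ) (A : Matrix ι ι R) : ℝ :=
  ind (∀ j k, d j → π ∣ A j k) * ind (π ^ e * A.det ≠ 0)

/-- The average of `weight` over symmetric matrices. -/
noncomputable def avgWeight [Finite R] (π : R) (d : ι → Prop) (e : ℕ) : ℝ :=
  avg fun A : SymMat ι R => weight π d e A.1

theorem weight_submatrix (π : R) (σ : ι ≃ κ) (d : κ → Prop) (e : ℕ) (A : Matrix κ κ R) :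
    weight π (fun j => d (σ j)) e (A.submatrix σ σ) = weight π d e A := by
  rw [weight, weight, det_submatrix_equiv_self]
  congr 2
  simp only [submatrix_apply, eq_iff_iff]
  rw [σ.forall_congr_left]
  refine forall_congr' fun j => ?_
  rw [σ.forall_congr_left]
  simp

theorem weight_eq_zero (π : R) {d : ι → Prop} (e : ℕ) {A : Matrix ι ι R} {j k : ι} (hj : d j)
    (h : ¬ π ∣ A j k) : weight π d e A = 0 := by
  rw [weight, ind_false fun h' => h (h' j k hj), zero_mul]

theorem avg_weight_eq_zero {γ : Type*} [Finite γ] (π : R) {d : ι → Prop} (e : ℕ)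
    (f : γ → Matrix ι ι R) {j k : ι} (hj : d j) (h : ∀ x, ¬ π ∣ f x j k) :
    avg (fun x => weight π d e (f x)) = 0 :=
  (congrArg avg (funext fun x => weight_eq_zero π e hj (h x))).trans avg_zero

variable [Finite R]

theorem avgWeight_reindex (π : R) (σ : ι ≃ κ) (d : κ → Prop) (e : ℕ) :
    avgWeight π (fun j => d (σ j)) e = avgWeight π d e := by
  rw [avgWeight, ← avg_equiv (SymMat.reindex σ), avgWeight]
  exact congrArg avg (funext fun A => weight_submatrix π σ d e A.1)

theorem avg_weight_fromBlocks (π : R) (d : β → Prop) (e : ℕ) (E : SymMat α R)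
    (hE : IsUnit E.1.det) (B : Matrix α β R) (hB : ∀ j k, d k → π ∣ B j k) :
    avg (fun D : SymMat β R =>
      weight π (Sum.elim (fun _ => False) d) e (fromBlocks E.1 B Bᵀ D.1)) = avgWeight π d e := by
  have hS : (Bᵀ * E.1⁻¹ * B).IsSymm := by
    rw [IsSymm, transpose_mul, transpose_mul, transpose_transpose, transpose_nonsing_inv, E.2,
      Matrix.mul_assoc]
  have hdvd : ∀ j k, d j → π ∣ (Bᵀ * E.1⁻¹ * B) j k := fun j k hj => by
    rw [Matrix.mul_assoc, mul_apply]
    exact Finset.dvd_sum fun l _ => (hB l j hj).mul_right _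
  let τ : SymMat β R ≃ SymMat β R :=
    { toFun := fun D => ⟨D.1 - Bᵀ * E.1⁻¹ * B, D.2.sub hS⟩
      invFun := fun D => ⟨D.1 + Bᵀ * E.1⁻¹ * B, D.2.add hS⟩
      left_inv := fun D => Subtype.ext (sub_add_cancel _ _)
      right_inv := fun D => Subtype.ext (add_sub_cancel_right _ _) }
  rw [avgWeight, ← avg_equiv τ fun D => weight π d e D.1]
  refine congrArg avg (funext fun D => ?_)
  have := invertibleOfIsUnitDet E.1 hE
  rw [weight, weight, det_fromBlocks₁₁, invOf_eq_nonsing_inv, mul_left_comm]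
  congr 2
  · refine propext ⟨fun h j k hj => ?_, fun h => ?_⟩
    · exact dvd_sub (h (.inr j) (.inr k) hj) (hdvd j k hj)
    · rintro (j | j) (k | k) hj
      · exact hj.elim
      · exact hj.elim
      · exact hB k j hj
      · exact (dvd_sub_left (hdvd j k hj)).1 (h j k hj)
  · rw [Ne, Ne, hE.mul_right_eq_zero]
    rfl

theorem avgWeight_true (π : R) (e : ℕ) :
    avgWeight π (fun _ : ι => True) e =
      avg (fun a : R => ind (π ∣ a)) ^ (Fintype.card ι * (Fintype.card ι + 1) / 2) *
        avgWeight π (fun _ : ι => False) (e + Fintype.card ι) := by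
  have hcard : Fintype.card ι * (Fintype.card ι + 1) / 2 =
      Nat.card {z : Sym2 ι // (fun _ => True) z} := by
    rw [Nat.card_congr (Equiv.subtypeUnivEquiv fun _ => trivial), Nat.card_eq_fintype_card,
      Sym2.card, Nat.choose_two_right, Nat.add_sub_cancel, mul_comm]
  have hr : ∀ x : Sym2 ι → R, x ∈ (AddMonoidHom.mulLeft (fun _ : Sym2 ι => π)).range ↔
      ∀ z, True → π ∣ x z := fun x => by
    constructor
    · rintro ⟨y, rfl⟩ z -
      exact dvd_mul_right π (y z)
    · intro h
      choose y hy using fun z => h z trivial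
      exact ⟨y, funext fun z => (hy z).symm⟩
  have key := avg_ind_range_mul (AddMonoidHom.mulLeft (fun _ : Sym2 ι => π))
    fun x => ind (π ^ e * (equivSym2 x).1.det ≠ 0)
  simp only [hr] at key
  rw [hcard, ← avg_ind_dvd_pi, avgWeight, avgWeight,
    ← avg_equiv equivSym2 fun A => weight π (fun _ => True) e A.1,
    ← avg_equiv equivSym2 fun A => weight π (fun _ => False) (e + Fintype.card ι) A.1]
  convert key using 2
  · refine funext fun x => ?_
    rw [weight]
    congr 2
    refine propext ⟨fun h z _ => ?_, fun h j k _ => h _ trivial⟩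
    induction z with | _ j k => exact h j k trivial
  · refine congrArg avg (funext fun x => ?_)
    have : (equivSym2 (AddMonoidHom.mulLeft (fun _ : Sym2 ι => π) x)).1 = π • (equivSym2 x).1 := by
      ext j k; rfl
    rw [weight, ind_true fun _ _ h => h.elim, one_mul, this, det_smul, pow_add, mul_assoc]

theorem avg_weight_bordered_of_isUnit (π : R) (d : β → Prop) (e : ℕ) {a : R} (ha : IsUnit a)
    {b : β → R} (hb : ∀ k, d k → π ∣ b k) :
    avg (fun D : SymMat β R => weight π (Sum.elim (fun _ => False) d) e (bordered a b D.1)) =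
      avgWeight π d e :=
  avg_weight_fromBlocks π d e (unitEquiv a) (by rw [det_unique]; exact ha) _ fun _ k => hb k

theorem avg_weight_bordered_bordered (π : R) (hπ : ∀ x : R, IsUnit x ↔ ¬ π ∣ x) (d : β → Prop)
    (e : ℕ) {a : R} (ha : π ∣ a) {b : Unit ⊕ β → R} (hu : ¬ π ∣ b (.inl ()))
    (hb : ∀ k, d k → π ∣ b (.inr k)) :
    avg (fun D : SymMat (Unit ⊕ β) R =>
      weight π (Sum.elim (fun _ => False) (Sum.elim (fun _ => False) d)) e (bordered a b D.1)) =
      avg (fun a : R => ind (π ∣ a)) ^ Nat.card {k // d k} * avgWeight π d e := by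
  rw [avg_bordered fun D => weight π (Sum.elim (fun _ => False) (Sum.elim (fun _ => False) d)) e
    (bordered a b D), ← avg_ind_dvd_pi, ← avg_mul_const]
  refine Eq.trans (b := avg fun _ : R => avg fun b' : β → R =>
    ind (∀ k, d k → π ∣ b' k) * avgWeight π d e)
    (congrArg avg (funext fun c => congrArg avg (funext fun b' => ?_))) (avg_const _)
  by_cases hb' : ∀ k, d k → π ∣ b' k
  · rw [ind_true hb', one_mul]
    let B : Matrix (Unit ⊕ Unit) β R :=
      Matrix.of (Sum.elim (fun _ k => b (.inr k)) fun _ => b')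
    let E : SymMat (Unit ⊕ Unit) R :=
      ⟨bordered a (fun _ => b (.inl ())) (unitEquiv c).1,
        IsSymm.fromBlocks (unitEquiv a).2 rfl (unitEquiv c).2⟩
    have hE : IsUnit E.1.det := by
      have : E.1.det = a * c - b (.inl ()) * b (.inl ()) := by
        rw [← det_submatrix_equiv_self (finSumFinEquiv (m := 1) (n := 1) |>.symm.trans
          (Equiv.sumCongr (Equiv.ofUnique _ _) (Equiv.ofUnique _ _))), det_fin_two]
        rfl
      rw [this, hπ, dvd_sub_right (ha.mul_right c), ← hπ]
      exact ((hπ _).2 hu).mul ((hπ _).2 hu)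
    rw [← avg_weight_fromBlocks π d e E hE B (by rintro (j | j) k hk; exacts [hb k hk, hb' k hk])]
    refine congrArg avg (funext fun D => ?_)
    rw [← weight_submatrix π (Equiv.sumAssoc Unit Unit β)]
    congr 1
    · ext ((j | j) | j) <;> rfl
    · ext ((j | j) | j) ((k | k) | k) <;> rfl
  · rw [ind_false hb', zero_mul]
    push Not at hb'
    obtain ⟨k, hk, hbk⟩ := hb'
    refine (congrArg avg (funext fun D => ?_)).trans avg_zero
    exact weight_eq_zero π e (j := .inr (.inr k)) (k := .inr (.inl ())) hk hbk

theorem avg_weight_bordered_of_dvd (π : R) (hπ : ∀ x : R, IsUnit x ↔ ¬ π ∣ x) (d : β → Prop)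
    (e : ℕ) {a : R} (ha : π ∣ a) {b : β → R} {j : β} (hj : ¬ π ∣ b j)
    (hb : ∀ k, d k → π ∣ b k) :
    avg (fun D : SymMat β R => weight π (Sum.elim (fun _ => False) d) e (bordered a b D.1)) =
      avg (fun a : R => ind (π ∣ a)) ^ Nat.card {k // d k} *
        avgWeight π (fun k : {k // k ≠ j} => d k) e := by
  have hdj : ¬ d j := fun h => hj (hb j h)
  let σ : Unit ⊕ {k // k ≠ j} ≃ β :=
    (Equiv.sumCongr (Equiv.ofUnique Unit {k // k = j}) (Equiv.refl _)).trans
      (Equiv.sumCompl fun k => k = j)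
  rw [← card_subtype_ne d hdj, ← avg_weight_bordered_bordered π hπ (fun k : {k // k ≠ j} => d k) e ha
    (b := fun k => b (σ k)) hj fun k => hb k, ← avg_equiv (SymMat.reindex σ) fun D =>
      weight π (Sum.elim (fun _ => False) (Sum.elim (fun _ => False) fun k : {k // k ≠ j} => d k)) e
        (bordered a (fun k => b (σ k)) D.1)]
  refine congrArg avg (funext fun D => ?_)
  rw [← weight_submatrix π (Equiv.sumCongr (Equiv.refl Unit) σ)]
  congr 1
  · ext (k | k | k)
    · rfl
    · exact iff_of_false hdj id
    · rfl
  · ext (k | k) (l | l) <;> rfl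

theorem avg_weight_bordered (π : R) (hπ : ∀ x : R, IsUnit x ↔ ¬ π ∣ x) (d : β → Prop) (e : ℕ)
    (u : ℝ) (hu : ∀ j, ¬ d j → avgWeight π (fun k : {k // k ≠ j} => d k) e = u) {q : ℝ}
    (hq : avg (fun a : R => ind (π ∣ a)) = q) (a : R) (b : β → R) :
    avg (fun D : SymMat β R => weight π (Sum.elim (fun _ => False) d) e (bordered a b D.1)) =
      ind (¬ π ∣ a) * (ind (∀ k, d k → π ∣ b k) * avgWeight π d e) +
      ind (π ∣ a) * ((ind (∀ k, d k → π ∣ b k) - ind (∀ k, True → π ∣ b k)) *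
        (q ^ Nat.card {k // d k} * u)) +
      avg (fun D : SymMat β R => weight π (Sum.elim (fun _ => True) d) e (bordered a b D.1)) := by
  have hzero : ∀ (d₀ : Unit → Prop) (j : β), d j → ¬ π ∣ b j →
      avg (fun D : SymMat β R => weight π (Sum.elim d₀ d) e (bordered a b D.1)) = 0 :=
    fun d₀ j hdj hj => avg_weight_eq_zero π e (fun D : SymMat β R => bordered a b D.1)
      (j := .inr j) (k := .inl ()) (d := Sum.elim d₀ d) hdj fun _ => hj
  by_cases ha : π ∣ a
  · rw [ind_false (not_not.2 ha), ind_true ha]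
    by_cases hb : ∀ k, d k → π ∣ b k
    · rw [ind_true hb]
      by_cases hall : ∀ k, True → π ∣ b k
      · rw [ind_true hall, sub_self, zero_mul, zero_mul, mul_zero, zero_add, zero_add]
        refine congrArg avg (funext fun D => ?_)
        rw [weight, weight]
        congr 2
        refine propext ⟨?_, fun h j k hj => h j k ?_⟩
        · rintro h (j | j) (k | k) hj
          · exact ha
          · exact hall k trivial
          · exact hall j trivial
          · exact h (.inr j) (.inr k) hj
        · rcases j with j | j
          · exact hj.elim
          · exact hj
      · rw [ind_false hall]
        push Not at hall
        obtain ⟨j, -, hj⟩ := hall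
        rw [avg_weight_eq_zero π e (fun D : SymMat β R => bordered a b D.1) (j := .inl ()) (k := .inr j)
          (d := Sum.elim (fun _ => True) d) trivial fun _ => hj,
          avg_weight_bordered_of_dvd π hπ d e ha hj hb, hu j fun h => hj (hb j h), hq]
        ring
    · rw [ind_false hb, ind_false fun h => hb fun k _ => h k trivial]
      push Not at hb
      obtain ⟨j, hdj, hj⟩ := hb
      rw [hzero (fun _ => False) j hdj hj, hzero (fun _ => True) j hdj hj]
      ring
  · rw [ind_true ha, ind_false ha, avg_weight_eq_zero π e (fun D : SymMat β R => bordered a b D.1)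
      (j := .inl ()) (k := .inl ()) (d := Sum.elim (fun _ => True) d) trivial fun _ => ha]
    by_cases hb : ∀ k, d k → π ∣ b k
    · rw [ind_true hb, avg_weight_bordered_of_isUnit π d e ((hπ a).2 ha) hb]
      ring
    · rw [ind_false hb]
      push Not at hb
      obtain ⟨j, hdj, hj⟩ := hb
      rw [hzero (fun _ => False) j hdj hj]
      ring
theorem avgWeight_sum_unit (π : R) (hπ : ∀ x : R, IsUnit x ↔ ¬ π ∣ x) (d : β → Prop) (e : ℕ)
    (u : ℝ) (hu : ∀ j, ¬ d j → avgWeight π (fun k : {k // k ≠ j} => d k) e = u) {q : ℝ}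
    (hq : avg (fun a : R => ind (π ∣ a)) = q) :
    avgWeight π (Sum.elim (fun _ : Unit => False) d) e =
      (1 - q) * (q ^ Nat.card {k // d k} * avgWeight π d e) +
        q * ((q ^ Nat.card {k // d k} - q ^ Fintype.card β) * (q ^ Nat.card {k // d k} * u)) +
        avgWeight π (Sum.elim (fun _ : Unit => True) d) e := by
  have hcard : Nat.card {k : β // (fun _ => True) k} = Fintype.card β := by
    rw [Nat.card_congr (Equiv.subtypeUnivEquiv fun _ => trivial), Nat.card_eq_fintype_card]
  have hd := avg_ind_dvd_pi π d
  have htrue := avg_ind_dvd_pi π fun _ : β => True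
  rw [hcard] at htrue
  rw [avgWeight, avg_bordered fun A => weight π (Sum.elim (fun _ : Unit => False) d) e A,
    avgWeight.eq_def π (Sum.elim (fun _ : Unit => True) d),
    avg_bordered fun A => weight π (Sum.elim (fun _ : Unit => True) d) e A]
  simp only [avg_weight_bordered π hπ d e u hu hq, avg_add, avg_const_mul, avg_mul_const, avg_sub, ind_not, hd, htrue, hq,
    avg_const]

theorem avgWeight_eq_corankSum {R : Type*} [CommRing R] [Finite R] (π : R)
    (hπ : ∀ x : R, IsUnit x ↔ ¬ π ∣ x) {q : ℝ} (h0 : 0 < q) (h1 : q < 1)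
    (hq : avg (fun a : R => ind (π ∣ a)) = q) (m : ℕ) {ι : Type} [Fintype ι] [DecidableEq ι]
    (d : ι → Prop) (e i : ℕ) (hi : Nat.card {k // d k} = i) (hm : Nat.card {k // ¬ d k} = m) :
    avgWeight π d e = q ^ (i * (i + 1) / 2 + i * m) * (PiProd m q *
      corankSum q (fun k => avgWeight π (fun _ : Fin (i + k) => False) (e + (i + k))) m) := by
  induction m using Nat.strong_induction_on generalizing ι e i with
  | _ m ih =>
  classical
  have hι : Fintype.card ι = i + m := by
    rw [← hi, ← hm, Nat.card_eq_fintype_card, Nat.card_eq_fintype_card,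
      Fintype.card_subtype_compl]
    have := Fintype.card_subtype_le d
    omega
  rcases m with _ | m
  · have hd : d = fun _ => True := funext fun k => eq_true <| by
      by_contra hk
      have := Finite.card_eq_zero_iff.1 hm
      exact this.elim ⟨k, hk⟩
    rw [hd, avgWeight_true, hq, corankSum_zero, hι,
      ← avgWeight_reindex π ((Fintype.equivFin ι).trans (finCongr hι)) fun _ => False]
    simp [PiProd]
  · obtain ⟨o, ho⟩ : ∃ o, ¬ d o := by
      by_contra! h
      have : IsEmpty {k // ¬ d k} := ⟨fun k => k.2 (h k.1)⟩
      simp at hm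
    let σ : Unit ⊕ {k // k ≠ o} ≃ ι :=
      (Equiv.sumCongr (Equiv.ofUnique Unit {k // k = o}) (Equiv.refl _)).trans
        (Equiv.sumCompl fun k => k = o)
    have hσ : (fun k => d (σ k)) = Sum.elim (fun _ => False) fun k : {k // k ≠ o} => d k := by
      ext (k | k)
      · exact iff_of_false ho id
      · rfl
    have hcard := card_subtype_ne d ho
    have hcard' : Nat.card {k : {k // k ≠ o} // ¬ d k} = m := by
      have := card_subtype_not_ne d ho
      omega
    have hβ : Fintype.card {k // k ≠ o} = i + m := by
      rw [Fintype.card_subtype_compl, Fintype.card_subtype_eq, hι]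
      omega
    rw [hi] at hcard
    have hW := ih m (Nat.lt_succ_self m) (fun k : {k // k ≠ o} => d k) e i hcard hcard'
    have hV := ih m (Nat.lt_succ_self m) (Sum.elim (fun _ : Unit => True)
      fun k : {k // k ≠ o} => d k) e (i + 1)
      (by
        rw [Nat.card_congr Equiv.subtypeSum, Nat.card_sum, add_comm]
        exact congrArg₂ _ hcard (Nat.card_eq_of_equiv_fin
          ((Equiv.subtypeUnivEquiv fun _ => trivial).trans (Equiv.ofUnique _ _))))
      (by
        have : IsEmpty {k : Unit // ¬ True} := ⟨fun k => k.2 trivial⟩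
        rw [Nat.card_congr Equiv.subtypeSum, Nat.card_sum]
        exact (congrArg₂ _ (Nat.card_eq_zero.2 (.inl this)) hcard').trans (zero_add m))
    have hshift : (fun k => avgWeight π (fun _ : Fin (i + 1 + k) => False) (e + (i + 1 + k))) =
        fun k => avgWeight π (fun _ : Fin (i + (k + 1)) => False) (e + (i + (k + 1))) :=
      funext fun k => congrArg (fun n => avgWeight π (fun _ : Fin n => False) (e + n)) (by ring)
    rw [hshift] at hV
    have hexp : (i + 1) * (i + 1 + 1) / 2 = i * (i + 1) / 2 + (i + 1) := by
      rw [show (i + 1) * (i + 1 + 1) = i * (i + 1) + (i + 1) * 2 by ring,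
        Nat.add_mul_div_right _ _ two_pos]
    rw [hexp] at hV
    rw [← avgWeight_reindex π σ d, hσ]
    rcases m with _ | m
    · have hu : ∀ j : {k // k ≠ o}, ¬ d j →
          avgWeight π (fun k : {k // k ≠ j} => d k) e = 0 := fun j hj =>
        ((Finite.card_eq_zero_iff.1 hcard').false ⟨j, hj⟩).elim
      rw [avgWeight_sum_unit π hπ _ e 0 hu hq, hcard, hW, hV]
      have key := corankSum_one h1
        fun k => avgWeight π (fun _ : Fin (i + k) => False) (e + (i + k))
      rw [corankSum_zero, corankSum_zero, PiProd_succ]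
      generalize i * (i + 1) / 2 = t
      linear_combination (-q ^ (t + i) * PiProd 0 q) * key
    · have hu : ∀ j : {k // k ≠ o}, ¬ d j →
          avgWeight π (fun k : {k // k ≠ j} => d k) e = _ := fun j hj =>
        ih m (by omega) (fun k : {k // k ≠ j} => d k) e i
          ((card_subtype_ne (fun k : {k // k ≠ o} => d k) hj).trans hcard)
          (by have := card_subtype_not_ne (fun k : {k // k ≠ o} => d k) hj; omega)
      rw [avgWeight_sum_unit π hπ _ e _ hu hq, hcard, hW, hV, hβ]
      have key := corankSum_succ_succ h0 h1
        (fun k => avgWeight π (fun _ : Fin (i + k) => False) (e + (i + k))) m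
      rw [PiProd_succ (m + 1), PiProd_succ m]
      generalize i * (i + 1) / 2 = t
      linear_combination
        (-q ^ (t + i * (m + 2)) * (PiProd m q * (1 - q ^ (m + 1)))) * key

end SymmetricMatrices

theorem avg_ind {α : Type*} [Finite α] (P : α → Prop) :
    avg (fun a => ind (P a)) = (Nat.card {a // P a} : ℝ) / Nat.card α := by
  classical
  let := Fintype.ofFinite α
  rw [avg_eq_sum_div, Nat.card_eq_fintype_card, Nat.card_eq_fintype_card, Fintype.card_subtype,
    ← Finset.sum_boole]
  exact congrArg (· / _) (Finset.sum_congr rfl fun a _ => by rw [ind])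

section ZModPrimePow

variable {p μ : ℕ} [Fact p.Prime]

theorem natCast_dvd_zmod_iff (hμ : μ ≠ 0) (x : ZMod (p ^ μ)) :
    (p : ZMod (p ^ μ)) ∣ x ↔ ZMod.castHom (dvd_pow_self p hμ) (ZMod p) x = 0 := by
  refine ⟨?_, fun h => ?_⟩
  · rintro ⟨y, rfl⟩
    rw [map_mul, map_natCast, ZMod.natCast_self, zero_mul]
  · rw [← ZMod.natCast_zmod_val x, map_natCast, ZMod.natCast_eq_zero_iff] at h
    rw [← ZMod.natCast_zmod_val x]
    exact Nat.cast_dvd_cast h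

theorem isUnit_zmod_iff (hμ : μ ≠ 0) (x : ZMod (p ^ μ)) :
    IsUnit x ↔ ¬ (p : ZMod (p ^ μ)) ∣ x := by
  rw [natCast_dvd_zmod_iff hμ, ← ZMod.natCast_zmod_val x, map_natCast, ZMod.natCast_eq_zero_iff,
    ZMod.isUnit_iff_coprime, Nat.coprime_pow_right_iff (Nat.pos_of_ne_zero hμ), Nat.coprime_comm,
    (Fact.out : p.Prime).coprime_iff_not_dvd]

theorem avg_ind_natCast_dvd_zmod (hμ : μ ≠ 0) :
    avg (fun a : ZMod (p ^ μ) => ind ((p : ZMod (p ^ μ)) ∣ a)) = 1 / p := by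
  let φ := (ZMod.castHom (dvd_pow_self p hμ) (ZMod p)).toAddMonoidHom
  have hφ : φ.ker.index = p := by
    rw [AddSubgroup.index_ker, AddMonoidHom.range_eq_top.2
      (ZMod.castHom_surjective (dvd_pow_self p hμ)), AddSubgroup.card_top, Nat.card_zmod]
  have hker : Nat.card {a : ZMod (p ^ μ) // (p : ZMod (p ^ μ)) ∣ a} = Nat.card φ.ker :=
    Nat.card_congr (Equiv.subtypeEquivRight (natCast_dvd_zmod_iff hμ))
  have hpos : (Nat.card φ.ker : ℝ) ≠ 0 := by exact_mod_cast Nat.card_pos.ne'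
  rw [avg_ind, hker, ← AddSubgroup.card_mul_index φ.ker, hφ, Nat.cast_mul]
  field_simp

theorem avgWeight_zmod_eq_zero {n e : ℕ} (h : μ ≤ e) :
    avgWeight (p : ZMod (p ^ μ)) (fun _ : Fin n => False) e = 0 := by
  have hpow : (p : ZMod (p ^ μ)) ^ e = 0 := by
    rw [← Nat.cast_pow, ZMod.natCast_eq_zero_iff]
    exact pow_dvd_pow p h
  refine (congrArg avg (funext fun A => ?_)).trans avg_zero
  rw [weight, hpow, zero_mul, ind_false (P := (0 : ZMod (p ^ μ)) ≠ 0) fun h => h rfl, mul_zero]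

theorem avgWeight_zmod_fin_zero {e : ℕ} (h : e < μ) :
    avgWeight (p : ZMod (p ^ μ)) (fun _ : Fin 0 => False) e = 1 := by
  have hpow : (p : ZMod (p ^ μ)) ^ e ≠ 0 := by
    rw [← Nat.cast_pow, Ne, ZMod.natCast_eq_zero_iff,
      Nat.pow_dvd_pow_iff_le_right (Fact.out : p.Prime).one_lt]
    exact h.not_ge
  have : Nonempty (SymMat (Fin 0) (ZMod (p ^ μ))) := ⟨⟨0, Matrix.isSymm_zero⟩⟩
  refine (congrArg avg (funext fun A => ?_)).trans (avg_const 1)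
  rw [weight, ind_true fun _ _ h => h.elim, one_mul, Matrix.det_isEmpty, mul_one, ind_true hpow]

theorem Psym_eq_avgWeight (n : ℕ) :
    Psym n (p ^ μ) = avgWeight (p : ZMod (p ^ μ)) (fun _ : Fin n => False) 0 := by
  have hcard : Nat.card (SymMat (Fin n) (ZMod (p ^ μ))) = (p ^ μ) ^ (n * (n + 1) / 2) := by
    rw [← Nat.card_congr SymMat.equivSym2, Nat.card_fun, Nat.card_zmod, Nat.card_eq_fintype_card,
      Sym2.card, Fintype.card_fin, Nat.choose_two_right, Nat.add_sub_cancel, mul_comm n]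
  have hw : avgWeight (p : ZMod (p ^ μ)) (fun _ : Fin n => False) 0 =
      avg fun A : SymMat (Fin n) (ZMod (p ^ μ)) => ind (A.1.det ≠ 0) :=
    congrArg avg (funext fun A => by
      rw [weight, ind_true fun _ _ h => h.elim, one_mul, pow_zero, one_mul])
  rw [hw, avg_ind, hcard, Psym, Nsym, ← Nat.cast_pow]
  congr 2
  exact Nat.card_congr (Equiv.subtypeSubtypeEquivSubtypeInter _ _).symm

theorem avgWeight_zmod_rec (hμ : μ ≠ 0) (n e : ℕ) :
    avgWeight (p : ZMod (p ^ μ)) (fun _ : Fin n => False) e = PiProd n (1 / (p : ℝ)) *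
      corankSum (1 / (p : ℝ))
        (fun k => avgWeight (p : ZMod (p ^ μ)) (fun _ : Fin k => False) (e + k)) n := by
  have hp : (1 : ℝ) < p := by exact_mod_cast (Fact.out : p.Prime).one_lt
  rw [avgWeight_eq_corankSum (p : ZMod (p ^ μ)) (isUnit_zmod_iff hμ) (by positivity)
    ((div_lt_one (by positivity)).2 hp) (avg_ind_natCast_dvd_zmod hμ) n (fun _ : Fin n => False) e 0
    (by simp) (by simp)]
  rw [zero_mul, zero_mul, Nat.zero_div, add_zero, pow_zero, one_mul]
  have : (fun k => avgWeight (p : ZMod (p ^ μ)) (fun _ : Fin (0 + k) => False) (e + (0 + k))) =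
      fun k => avgWeight (p : ZMod (p ^ μ)) (fun _ : Fin k => False) (e + k) :=
    funext fun k => congrArg
      (fun n => avgWeight (p : ZMod (p ^ μ)) (fun _ : Fin n => False) (e + n)) (zero_add k)
  rw [this]

end ZModPrimePow

theorem Psym_tendsto (p : ℕ) (hp : p.Prime) (q : ℝ) (hq : q = 1 / p)
    (μ : ℕ) (hμ : 1 ≤ μ) (s : ℕ) (hs : s = (μ - 1) / 2) :
    Filter.Tendsto (fun n : ℕ => Psym n (p ^ μ)) Filter.atTop
      (nhds ((PiProdInf q / ((1 - q) * PiProdInf (q ^ 2))) *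
        ∑ j ∈ Finset.range (s + 1), (q ^ (3 * j) - q ^ (μ + j)) / PiProd j (q ^ 2))) := by
  have := Fact.mk hp
  have hp1 : (1 : ℝ) < p := by exact_mod_cast hp.one_lt
  have h0 : 0 < q := by rw [hq]; positivity
  have h1 : q < 1 := by rw [hq]; exact (div_lt_one (by positivity)).2 hp1
  have hμ0 : μ ≠ 0 := by omega
  have hP : ∀ n, Psym n (p ^ μ) = PowerSeries.coeff (μ - 1) (cumulativeDetSeries q n) := fun n =>
    (Psym_eq_avgWeight n).trans <| eq_coeff_cumulativeDetSeries h0 h1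
      (Y := fun n e => avgWeight (p : ZMod (p ^ μ)) (fun _ : Fin n => False) e)
      (fun _ h => avgWeight_zmod_fin_zero h) (fun _ _ h => avgWeight_zmod_eq_zero h)
      (hq ▸ avgWeight_zmod_rec hμ0) n (μ - 1) 0 (by omega)
  have hlim := tendsto_coeff_cumulativeDetSeries h0 h1 (μ - 1)
  rw [sum_even_eq μ hμ, ← hs] at hlim
  simp only [hP]
  convert hlim using 2
  rw [← mul_assoc, div_mul_div_comm, mul_one, mul_comm (1 - q)]
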